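/- Determinantal reduction for multivariate Bessel functions with k perturbed coordinates: For two k-tuples a_1, …, a_k ∈ ℂ and integers b_1 > ⋯ > b_k ∈ {0, …, N−1}, and any λ ∈ ℝ^N with distinct entries, B(μ, λ)/B(ρ, λ) = (−1)^{k(k−1)/2} · (∏_{m≠l}(a_m − b_l))/(Δ(a)Δ(b)) · det( ((a_i − b_i)/(a_i − b_j)) · B(μ_{a_i, b_j}, λ)/B(ρ, λ) )_{i,j=1}^k, where μ := (a_1, a_2, …, a_k, N−1, …, b̂_1, …, b̂_2, …, b̂_k, …, 0) is the N-tuple obtained from ρ = (N−1, …, 0) by removing the coordinates b_1, …, b_k and prepending a_1, …, a_k, and μ_{a,b} := (a, N−1, …, b̂, …, 0) is obtained from ρ by removing the coordinate b and prepending a. -/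

import Mathlib

open MeasureTheory Filter Topology Complex ProbabilityTheory

noncomputable section

namespace GS

/-- Vandermonde determinant `∏_{i<j} (a i - a j)`. -/
def vdm {N : ℕ} (a : Fin N → ℂ) : ℂ :=
  ∏ p : Fin N × Fin N, if p.1 < p.2 then a p.1 - a p.2 else 1

/-- The staircase N-tuple `ρ = (N-1, ..., 1, 0)` as complex numbers. -/
def rhoC (N : ℕ) : Fin N → ℂ := fun i => (N : ℂ) - 1 - ((i : ℕ) : ℂ)

/-- The staircase N-tuple `ρ = (N-1, ..., 1, 0)` as real numbers. -/
def rhoR (N : ℕ) : Fin N → ℝ := fun i => (N : ℝ) - 1 - ((i : ℕ) : ℝ)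

/-- The multivariate Bessel function `B(a, b)` (determinantal formula). -/
def mvBessel {N : ℕ} (a b : Fin N → ℂ) : ℂ :=
  vdm (rhoC N) * Matrix.det (Matrix.of fun i j => Complex.exp (a i * b j)) / (vdm a * vdm b)

/-- The multivariate Bessel generating function of a measure on N-tuples. -/
def besselGF {N : ℕ} (μ : Measure (Fin N → ℝ)) (χ : Fin N → ℝ) (s : Fin N → ℂ) : ℂ :=
  ∫ x, mvBessel s (fun i => (x i : ℂ)) / mvBessel (fun i => (χ i : ℂ)) (fun i => (x i : ℂ)) ∂μ

/-- `φ^I_{χ,N}`: the Bessel generating function with `s j = χ j` for `j ∉ I`. -/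
def besselGFRestrict {N : ℕ} (μ : Measure (Fin N → ℝ)) (χ : Fin N → ℝ)
    (I : Finset (Fin N)) (s : Fin N → ℂ) : ℂ :=
  besselGF μ χ (fun j => if j ∈ I then s j else (χ j : ℂ))

/-- Partial derivative in the i-th coordinate. -/
def pderiv {N : ℕ} (f : (Fin N → ℂ) → ℂ) (i : Fin N) (r : Fin N → ℂ) : ℂ :=
  deriv (fun z => f (Function.update r i z)) (r i)

/-- The box `[χ_N, χ_1]^N` viewed inside `ℂ^N`. -/
def realBox {N : ℕ} (χ : Fin N → ℝ) : Set (Fin N → ℂ) :=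
  {s | ∀ i, ∃ t : ℝ, ((⨅ j, χ j) ≤ t ∧ t ≤ (⨆ j, χ j)) ∧ s i = (t : ℂ)}

/-- `χ`-smoothness: absolute and uniform convergence of the defining integral of the
multivariate Bessel generating function on a complex neighborhood of `[χ_N, χ_1]^N`. -/
def BesselSmooth {N : ℕ} (μ : Measure (Fin N → ℝ)) (χ : Fin N → ℝ) : Prop :=
  ∃ V : Set (Fin N → ℂ), IsOpen V ∧ realBox χ ⊆ V ∧
    ∃ G : (Fin N → ℝ) → ℝ, Integrable G μ ∧
      ∀ s ∈ V, ∀ x : Fin N → ℝ,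
        ‖mvBessel s (fun i => (x i : ℂ)) / mvBessel (fun i => (χ i : ℂ)) (fun i => (x i : ℂ))‖ ≤ G x

/-- `(1/N) ∂_{r_i} [log φ^I_{χ,N}(rN)]`. -/
def scaledLogDeriv {N : ℕ} (μ : Measure (Fin N → ℝ)) (χ : Fin N → ℝ)
    (I : Finset (Fin N)) (i : Fin N) (r : Fin N → ℂ) : ℂ :=
  ((N : ℂ))⁻¹ *
    pderiv (fun r' => Complex.log (besselGFRestrict μ χ I (fun j => (N : ℂ) * r' j))) i r

/-- `∂_{r_i} ∂_{r_j} [log φ^I_{χ,N}(rN)]`. -/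
def logDeriv2 {N : ℕ} (μ : Measure (Fin N → ℝ)) (χ : Fin N → ℝ)
    (I : Finset (Fin N)) (i j : Fin N) (r : Fin N → ℂ) : ℂ :=
  pderiv (fun r' =>
    pderiv (fun r'' => Complex.log (besselGFRestrict μ χ I (fun l => (N : ℂ) * r'' l))) i r') j r

/-- LLN-appropriateness of the measures `μ N` for the N-tuples `χ N`. -/
def LLNAppropriate (μ : ∀ N : ℕ, Measure (Fin N → ℝ)) (χ : ∀ N : ℕ, Fin N → ℝ)
    (Vχ : Set ℝ) (U : Set ℂ) (Ψ : ℂ → ℂ) : Prop :=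
  (∀ N, BesselSmooth (μ N) (χ N)) ∧
  IsCompact Vχ ∧ IsOpen U ∧ ((fun x : ℝ => (x : ℂ)) '' Vχ) ⊆ U ∧
  DifferentiableOn ℂ Ψ U ∧
  (∀ N : ℕ, ∀ i : Fin N, χ N i / N ∈ Vχ) ∧
  (∀ k : ℕ, 0 < k → ∀ ε : ℝ, 0 < ε → ∀ᶠ N : ℕ in atTop,
    ∀ I : Finset (Fin N), I.card = k → ∀ i ∈ I, ∀ r : Fin N → ℂ,
      (∀ j ∈ I, r j ∈ U) → ‖scaledLogDeriv (μ N) (χ N) I i r - Ψ (r i)‖ < ε)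

/-- CLT-appropriateness of the measures `μ N` for the N-tuples `χ N`. -/
def CLTAppropriate (μ : ∀ N : ℕ, Measure (Fin N → ℝ)) (χ : ∀ N : ℕ, Fin N → ℝ)
    (Vχ : Set ℝ) (U : Set ℂ) (Ψ : ℂ → ℂ) (Λ : ℂ → ℂ → ℂ) : Prop :=
  LLNAppropriate μ χ Vχ U Ψ ∧
  DifferentiableOn ℂ (fun p : ℂ × ℂ => Λ p.1 p.2) (U ×ˢ U) ∧
  (∀ k : ℕ, 0 < k → ∀ ε : ℝ, 0 < ε → ∀ᶠ N : ℕ in atTop,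
    ∀ I : Finset (Fin N), I.card = k → ∀ i ∈ I, ∀ j ∈ I, i ≠ j → ∀ r : Fin N → ℂ,
      (∀ l ∈ I, r l ∈ U) → ‖logDeriv2 (μ N) (χ N) I i j r - Λ (r i) (r j)‖ < ε)

/-- The Cauchy transform `Ξ(u) = ∫ 1/(u - x) dχ(x)`. -/
def cauchy (ρm : Measure ℝ) (u : ℂ) : ℂ := ∫ x, (u - (x : ℂ))⁻¹ ∂ρm

/-- Power sums `p_k(x) = x_1^k + ⋯ + x_N^k`. -/
def pSum {N : ℕ} (k : ℕ) (x : Fin N → ℝ) : ℝ := ∑ i, x i ^ k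

/-- Weak convergence of rescaled empirical measures `(1/N) Σ δ_{χ_{N,i}/N}` to `ρm`. -/
def empTendsto (χ : ∀ N : ℕ, Fin N → ℝ) (ρm : Measure ℝ) : Prop :=
  ∀ f : ℝ → ℝ, Continuous f →
    Tendsto (fun N : ℕ => (N : ℝ)⁻¹ * ∑ i : Fin N, f (χ N i / N)) atTop (𝓝 (∫ x, f x ∂ρm))

/-- Weak convergence of the (unrescaled) empirical measures `(1/N) Σ δ_{λ_{N,i}}` to `ρm`. -/
def empTendstoRaw (lam : ∀ N : ℕ, Fin N → ℝ) (ρm : Measure ℝ) : Prop :=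
  ∀ f : ℝ → ℝ, Continuous f →
    Tendsto (fun N : ℕ => (N : ℝ)⁻¹ * ∑ i : Fin N, f (lam N i)) atTop (𝓝 (∫ x, f x ∂ρm))

/-- A measure on ℝ is compactly supported. -/
def CompactSupported (ρm : Measure ℝ) : Prop := ∃ K : Set ℝ, IsCompact K ∧ ρm Kᶜ = 0

/-- A centered jointly Gaussian family with covariance `C`. -/
def IsCenteredGaussianFamily {ι : Type} {Ω : Type} [MeasurableSpace Ω] (P : Measure Ω)
    (G : ι → Ω → ℝ) (C : ι → ι → ℝ) : Prop :=
  IsProbabilityMeasure P ∧ (∀ k, Measurable (G k)) ∧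
    ∀ (m : ℕ) (a : Fin m → ℝ) (k : Fin m → ι),
      P.map (fun ω => ∑ j, a j * G (k j) ω) =
        ProbabilityTheory.gaussianReal 0 (Real.toNNReal (∑ i, ∑ j, a i * a j * C (k i) (k j)))

/-- The moment transform `M_{ρ̃}(z) = ∫ e^x z/(1 - e^x z) dρ(x)`. -/
def MT (ρm : Measure ℝ) (z : ℂ) : ℂ :=
  ∫ x, (Real.exp x : ℂ) * z / (1 - (Real.exp x : ℂ) * z) ∂ρm

/-- Measurable space structure on matrices (the product σ-algebra). -/
instance {m n α : Type*} [MeasurableSpace α] : MeasurableSpace (Matrix m n α) :=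
  inferInstanceAs (MeasurableSpace (m → n → α))

open Classical in
/-- Eigenvalues of a Hermitian matrix (junk value otherwise). -/
def eigs {N : ℕ} (X : Matrix (Fin N) (Fin N) ℂ) : Fin N → ℝ :=
  if h : X.IsHermitian then h.eigenvalues else 0

/-- The log-spectral measure of a random matrix law. -/
def logSpec {N : ℕ} (P : Measure (Matrix (Fin N) (Fin N) ℂ)) : Measure (Fin N → ℝ) :=
  P.map (fun X i => Real.log (eigs X i))

/-- The multivariate Bessel generating function of the log-spectral measure of a random
matrix law, with respect to `ρ = (N-1, ..., 0)`. -/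
def matrixGF {N : ℕ} (P : Measure (Matrix (Fin N) (Fin N) ℂ)) (s : Fin N → ℂ) : ℂ :=
  besselGF (logSpec P) (rhoR N) s

/-- The height function `t ↦ #{i : lam i ≤ t}`. -/
def heightCount {N : ℕ} (lam : Fin N → ℝ) (t : ℝ) : ℝ :=
  ((Finset.univ.filter fun i => lam i ≤ t).card : ℝ)




/-- The `N`-tuple obtained from `ρ = (N-1, …, 0)` by replacing the coordinates at the
positions `e 0 < e 1 < ⋯ < e (k-1)` (i.e. removing the values `b m = N - 1 - e m`) by the
values `a 0, …, a (k-1)`.  Since the multivariate Bessel function is symmetric in the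
entries of its first argument, this represents the tuple
`μ = (a_1, …, a_k, N-1, …, b̂_1, …, b̂_k, …, 0)` of the paper. -/
def perturbMany {N k : ℕ} (a : Fin k → ℂ) (e : Fin k → Fin N) (i : Fin N) : ℂ :=
  if i ∈ Finset.univ.image e then ∑ m, if e m = i then a m else 0 else rhoC N i

open Finset in
lemma aux_vdm_split {N k : ℕ} (e : Fin k → Fin N) (he : StrictMono e) (f : Fin N → ℂ) :
    vdm f = vdm (fun m => f (e m)) *
      ((∏ m, ∏ l ∈ (univ.image e)ᶜ, (if e m < l then (1:ℂ) else -1)) *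
        ∏ m, ∏ l ∈ (univ.image e)ᶜ, (f (e m) - f l)) *
      ∏ i ∈ (univ.image e)ᶜ, ∏ j ∈ (univ.image e)ᶜ, (if i < j then f i - f j else 1) := by
  have hS : ∀ g : Fin N → ℂ, ∏ i ∈ univ.image e, g i = ∏ m, g (e m) := fun g =>
    prod_image (fun x _ y _ h => he.injective h)
  unfold vdm
  rw [Fintype.prod_prod_type, Fintype.prod_prod_type]
  simp only
  rw [← prod_mul_prod_compl (univ.image e)]
  simp_rw [fun i : Fin N => (prod_mul_prod_compl (univ.image e)
    (fun j => if i < j then f i - f j else 1)).symm]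
  simp only [prod_mul_distrib, hS]
  rw [prod_comm (s := (univ.image e)ᶜ) (t := univ)]
  have h1 : (∏ m, ∏ l ∈ (univ.image e)ᶜ, (if e m < l then f (e m) - f l else 1)) *
      (∏ m, ∏ l ∈ (univ.image e)ᶜ, (if l < e m then f l - f (e m) else 1)) =
      (∏ m, ∏ l ∈ (univ.image e)ᶜ, (if e m < l then (1:ℂ) else -1)) *
        ∏ m, ∏ l ∈ (univ.image e)ᶜ, (f (e m) - f l) := by
    simp only [← prod_mul_distrib]
    refine prod_congr rfl fun m _ => prod_congr rfl fun l hl => ?_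
    have hne : e m ≠ l := by
      rintro rfl
      simp at hl
    rcases lt_or_gt_of_ne hne with h | h
    · simp [h, h.not_gt]
    · simp [h, h.not_gt]
  rw [← h1]
  simp only [he.lt_iff_lt]
  ring

open Finset in
lemma aux_vdm_ratio {N k : ℕ} (e : Fin k → Fin N) (he : StrictMono e) (f g : Fin N → ℂ)
    (hfg : ∀ l ∉ univ.image e, f l = g l) :
    vdm f * vdm (fun m => g (e m)) * ∏ m, ∏ l ∈ (univ.image e)ᶜ, (g (e m) - g l) =
    vdm g * vdm (fun m => f (e m)) * ∏ m, ∏ l ∈ (univ.image e)ᶜ, (f (e m) - g l) := by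
  rw [aux_vdm_split e he f, aux_vdm_split e he g]
  have h1 : ∏ m, ∏ l ∈ (univ.image e)ᶜ, (f (e m) - f l) =
      ∏ m, ∏ l ∈ (univ.image e)ᶜ, (f (e m) - g l) :=
    prod_congr rfl fun m _ => prod_congr rfl fun l hl => by rw [hfg l (mem_compl.1 hl)]
  have h2 : ∏ i ∈ (univ.image e)ᶜ, ∏ j ∈ (univ.image e)ᶜ, (if i < j then f i - f j else 1) =
      ∏ i ∈ (univ.image e)ᶜ, ∏ j ∈ (univ.image e)ᶜ, (if i < j then g i - g j else 1) :=
    prod_congr rfl fun m hm => prod_congr rfl fun l hl => by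
      rw [hfg l (mem_compl.1 hl), hfg m (mem_compl.1 hm)]
  rw [h1, h2]
  ring

open Finset in
lemma aux_vdm_update {N : ℕ} (g : Fin N → ℂ) (j : Fin N) (x : ℂ) :
    vdm (Function.update g j x) * (∏ l ∈ {j}ᶜ, (g j - g l)) * (x - g j) =
    vdm g * ∏ l, (x - g l) := by
  have h := aux_vdm_ratio (k := 1) (fun _ => j) (Subsingleton.strictMono _)
    (Function.update g j x) g (by
      intro l hl
      have : l ≠ j := by simpa [eq_comm] using hl
      simp [this])
  have e1 : (univ.image (fun _ : Fin 1 => j)) = {j} := by ext; simp [eq_comm]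
  rw [e1] at h
  have hv : ∀ u : Fin 1 → ℂ, vdm u = 1 := fun u => by simp [vdm, Fintype.prod_prod_type]
  simp only [hv, mul_one, Finset.univ_unique, Finset.prod_singleton, Function.update_self] at h
  rw [← prod_mul_prod_compl {j} (fun l => x - g l), prod_singleton]
  rw [h]
  ring

lemma aux_vdm_ne {N : ℕ} {f : Fin N → ℂ} (hf : Function.Injective f) : vdm f ≠ 0 := by
  unfold vdm
  refine Finset.prod_ne_zero_iff.2 fun p _ => ?_
  split_ifs with h
  · exact sub_ne_zero.2 fun h' => h.ne (hf h')
  · exact one_ne_zero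

lemma aux_sign (k : ℕ) :
    (∏ i : Fin k, ∏ j : Fin k, if i < j then (-1 : ℂ) else 1) = (-1) ^ (k * (k - 1) / 2) := by
  induction k with
  | zero => simp
  | succ n ih =>
    rw [Nat.triangle_succ, Fin.prod_univ_succ]
    simp [Fin.prod_univ_succ, ih, pow_add, mul_comm]

open Finset in
lemma aux_offdiag {k : ℕ} (b : Fin k → ℂ) :
    (∏ i, ∏ j, if i ≠ j then b i - b j else 1) = (-1) ^ (k * (k - 1) / 2) * vdm b ^ 2 := by
  rw [← aux_sign, vdm, Fintype.prod_prod_type, sq]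
  simp only
  have : (∏ i, ∏ j, if i < j then b i - b j else 1) = ∏ i, ∏ j, if j < i then b j - b i else 1 :=
    prod_comm
  have h2 : (∏ i : Fin k, ∏ j : Fin k, if i < j then (-1 : ℂ) else 1) =
    ∏ i : Fin k, ∏ j : Fin k, if j < i then (-1 : ℂ) else 1 := prod_comm
  conv_rhs => rw [h2]; enter [2, 2]; rw [this]
  simp only [← prod_mul_distrib]
  refine prod_congr rfl fun i _ => prod_congr rfl fun j _ => ?_
  rcases lt_trichotomy i j with h | h | h
  · simp [h, h.not_gt, h.ne]
  · simp [h]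
  · simp [h, h.not_gt, h.ne']

open Finset in
lemma aux_det {N k : ℕ} (e : Fin k → Fin N) (he : Function.Injective e)
    (M A : Matrix (Fin N) (Fin N) ℂ) (hA : A.det ≠ 0)
    (h : ∀ l ∉ univ.image e, M l = A l) :
    M.det = (Matrix.of fun m m' => (M * A⁻¹) (e m) (e m')).det * A.det := by
  have hu : IsUnit A.det := isUnit_iff_ne_zero.2 hA
  have h1 : M = (M * A⁻¹) * A := by rw [Matrix.mul_assoc, Matrix.nonsing_inv_mul _ hu, mul_one]
  have hrow : ∀ l ∉ univ.image e, ∀ j, (M * A⁻¹) l j = (1 : Matrix (Fin N) (Fin N) ℂ) l j := by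
    intro l hl j
    rw [← Matrix.mul_nonsing_inv _ hu, Matrix.mul_apply, Matrix.mul_apply, h l hl]
  conv_lhs => rw [h1]
  rw [Matrix.det_mul]
  congr 1
  rw [Matrix.twoBlockTriangular_det (M * A⁻¹) (fun i => i ∈ Set.range e)]
  · have h2 : (M * A⁻¹).toSquareBlockProp (fun i => ¬ i ∈ Set.range e) = 1 := by
      ext i j
      have := hrow i (by simpa using i.2) j
      simp only [Matrix.toSquareBlockProp_def, Matrix.of_apply, this, Matrix.one_apply,
        Subtype.ext_iff]
    rw [h2, Matrix.det_one, mul_one]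
    have h3 : (Matrix.of fun m m' => (M * A⁻¹) (e m) (e m')) =
        ((M * A⁻¹).toSquareBlockProp (fun i => i ∈ Set.range e)).submatrix
          (Equiv.ofInjective e he) (Equiv.ofInjective e he) := by
      ext m m'
      simp [Matrix.toSquareBlockProp_def]
    rw [h3]
    symm
    convert Matrix.det_submatrix_equiv_self (Equiv.ofInjective e he)
      ((M * A⁻¹).toSquareBlockProp (fun i => i ∈ Set.range e))
  · intro i hi j hj
    rw [hrow i (by simpa using hi), Matrix.one_apply_ne]
    rintro rfl
    exact hi hj

lemma aux_det_ne {N : ℕ} (lam : Fin N → ℝ) (hlam : Function.Injective lam) :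
    (Matrix.of fun i j => Complex.exp (rhoC N i * (lam j : ℂ))).det ≠ 0 := by
  have : (Matrix.of fun i j => Complex.exp (rhoC N i * (lam j : ℂ))) =
      ((Matrix.vandermonde (fun j => Complex.exp (lam j : ℂ))).transpose).submatrix (Fin.revPerm) id := by
    ext i j
    simp only [Matrix.of_apply, Matrix.submatrix_apply, Matrix.transpose_apply,
      Matrix.vandermonde_apply, id, ← Complex.exp_nat_mul]
    congr 2
    have hi := i.2
    simp only [rhoC, Fin.revPerm_apply, Fin.val_rev]
    rw [Nat.cast_sub (by omega)]
    push_cast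
    ring
  rw [this, Matrix.det_permute, Matrix.det_transpose]
  refine mul_ne_zero (by
    rcases Int.units_eq_one_or (Equiv.Perm.sign (Fin.revPerm : Equiv.Perm (Fin N))) with h | h <;>
    simp [h]) ?_
  rw [Matrix.det_vandermonde_ne_zero_iff]
  intro i j hij
  apply hlam
  have hij' : Complex.exp (lam i : ℂ) = Complex.exp (lam j : ℂ) := hij
  rw [← Complex.ofReal_exp, ← Complex.ofReal_exp, Complex.ofReal_inj] at hij'
  exact Real.exp_injective hij'

/-- Determinantal reduction for multivariate Bessel functions with k
perturbed coordinates.  Here `e : Fin k → Fin N` is strictly monotone, so that the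
removed staircase values `b m = N - 1 - e m` satisfy `b 0 > b 1 > ⋯ > b (k-1)`, and
`μ_{a_i, b_j} = Function.update (rhoC N) (e j) (a i)`. -/
theorem determinantal_reduction_for_multivariate_Bessel
    (N k : ℕ) (a : Fin k → ℂ) (e : Fin k → Fin N) (he : StrictMono e)
    (ha_inj : Function.Injective a) (ha_avoid : ∀ m : Fin k, ∀ i : Fin N, a m ≠ rhoC N i)
    (lam : Fin N → ℝ) (hlam : Function.Injective lam) :
    mvBessel (perturbMany a e) (fun i => (lam i : ℂ)) /
        mvBessel (rhoC N) (fun i => (lam i : ℂ)) =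
      (-1 : ℂ) ^ (k * (k - 1) / 2) *
        ((∏ p : Fin k × Fin k, if p.1 ≠ p.2 then a p.1 - rhoC N (e p.2) else 1) /
          (vdm a * vdm (fun m => rhoC N (e m)))) *
        Matrix.det (Matrix.of fun i j : Fin k =>
          (a i - rhoC N (e i)) / (a i - rhoC N (e j)) *
            (mvBessel (Function.update (rhoC N) (e j) (a i)) (fun i' => (lam i' : ℂ)) /
              mvBessel (rhoC N) (fun i' => (lam i' : ℂ)))) := by
  classical
  set A : Matrix (Fin N) (Fin N) ℂ :=
    Matrix.of fun i j => Complex.exp (rhoC N i * (lam j : ℂ)) with hAdef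
  have hA : A.det ≠ 0 := aux_det_ne lam hlam
  have hl : vdm (fun i => (lam i : ℂ)) ≠ 0 :=
    aux_vdm_ne fun i j h => hlam (Complex.ofReal_injective h)
  have hrinj : Function.Injective (rhoC N) := by
    intro i j h
    simp only [rhoC] at h
    have h' : ((i : ℕ) : ℂ) = ((j : ℕ) : ℂ) := by linear_combination -h
    exact Fin.ext (Nat.cast_injective h')
  have hr : vdm (rhoC N) ≠ 0 := aux_vdm_ne hrinj
  set b : Fin k → ℂ := fun m => rhoC N (e m) with hb
  have hbinj : Function.Injective b := hrinj.comp he.injective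
  have hratio : ∀ f : Fin N → ℂ,
      mvBessel f (fun i => (lam i : ℂ)) / mvBessel (rhoC N) (fun i => (lam i : ℂ)) =
      (Matrix.of fun i j => Complex.exp (f i * (lam j : ℂ))).det / A.det *
        (vdm (rhoC N) / vdm f) := by
    intro f
    unfold mvBessel
    rw [← hAdef]
    by_cases hf : vdm f = 0
    · simp [hf]
    · field_simp
  set E : Fin k → Fin N → ℂ := fun i j => Complex.exp (a i * (lam j : ℂ)) with hE
  set F : Matrix (Fin k) (Fin k) ℂ := Matrix.of fun i j => ∑ l, E i l * A⁻¹ l (e j) with hF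
  have hpe : ∀ m, perturbMany a e (e m) = a m := by
    intro m
    simp [perturbMany, he.injective.eq_iff]
  have hpo : ∀ l ∉ Finset.univ.image e, perturbMany a e l = rhoC N l := by
    intro l hl
    simp only [perturbMany, if_neg hl]
  -- determinants
  have hdet : (Matrix.of fun i j => Complex.exp (perturbMany a e i * (lam j : ℂ))).det =
      F.det * A.det := by
    rw [aux_det e he.injective _ A hA]
    · congr 2
      ext m m'
      simp [Matrix.mul_apply, hF, hE, hpe]
    · intro l hl
      ext j
      simp [hAdef, hpo l hl]
  have hdet1 : ∀ i j, (Matrix.of fun i' j' =>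
      Complex.exp (Function.update (rhoC N) (e j) (a i) i' * (lam j' : ℂ))).det =
      F i j * A.det := by
    intro i j
    rw [aux_det (k := 1) (fun _ => e j) (Function.injective_of_subsingleton _) _ A hA]
    · congr 1
      simp [Matrix.mul_apply, hF, hE]
    · intro l hl
      have : l ≠ e j := by simpa [eq_comm] using hl
      ext j'
      simp [hAdef, this]
  set P : Fin k → ℂ := fun i => ∏ l, (a i - rhoC N l) with hP
  set Q : Fin k → ℂ := fun j => ∏ l ∈ {e j}ᶜ, (rhoC N (e j) - rhoC N l) with hQ
  have hP0 : ∀ i, P i ≠ 0 := fun i =>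
    Finset.prod_ne_zero_iff.2 fun l _ => sub_ne_zero.2 (ha_avoid i l)
  have hQ0 : ∀ i, Q i ≠ 0 := fun i =>
    Finset.prod_ne_zero_iff.2 fun l hl => sub_ne_zero.2 fun h => by
      have := hrinj h
      simp [this] at hl
  have hentry : (Matrix.of fun i j : Fin k =>
          (a i - rhoC N (e i)) / (a i - rhoC N (e j)) *
            (mvBessel (Function.update (rhoC N) (e j) (a i)) (fun i' => (lam i' : ℂ)) /
              mvBessel (rhoC N) (fun i' => (lam i' : ℂ)))) =
      Matrix.of fun i j : Fin k => ((a i - b i) / P i) *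
        (Matrix.of fun i j : Fin k => Q j * F i j) i j := by
    ext i j
    simp only [Matrix.of_apply]
    rw [hratio, hdet1]
    have h1 := aux_vdm_update (rhoC N) (e j) (a i)
    have h2 : a i - rhoC N (e j) ≠ 0 := sub_ne_zero.2 (ha_avoid _ _)
    have h3 : vdm (Function.update (rhoC N) (e j) (a i)) =
        vdm (rhoC N) * P i / (Q j * (a i - rhoC N (e j))) := by
      rw [eq_div_iff (mul_ne_zero (hQ0 j) h2), ← h1]
      ring
    have h4 := hP0 i
    have h5 := hQ0 j
    rw [h3]
    simp only [hb]
    field_simp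
  rw [hentry, Matrix.det_mul_column, Matrix.det_mul_row, hratio, hdet]
  have hS : ∀ g : Fin N → ℂ, ∏ i, g i =
      (∏ m, g (e m)) * ∏ i ∈ (Finset.univ.image e)ᶜ, g i := fun g => by
    rw [← Finset.prod_mul_prod_compl (Finset.univ.image e) g,
      Finset.prod_image (fun x _ y _ h => he.injective h)]
  have key := aux_vdm_ratio e he (perturbMany a e) (rhoC N) hpo
  simp only [hpe] at key
  set Xb := ∏ m, ∏ l ∈ (Finset.univ.image e)ᶜ, (rhoC N (e m) - rhoC N l) with hXb
  set Xa := ∏ m, ∏ l ∈ (Finset.univ.image e)ᶜ, (a m - rhoC N l) with hXa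
  have hXb0 : Xb ≠ 0 := by
    refine Finset.prod_ne_zero_iff.2 fun m _ => Finset.prod_ne_zero_iff.2 fun l hl =>
      sub_ne_zero.2 fun h => ?_
    rw [← hrinj h] at hl
    simp at hl
  have hXa0 : Xa ≠ 0 := Finset.prod_ne_zero_iff.2 fun m _ =>
    Finset.prod_ne_zero_iff.2 fun l hl => sub_ne_zero.2 (ha_avoid _ _)
  have hPprod : ∏ i, P i = (∏ i, ∏ j, (a i - b j)) * Xa := by
    simp only [hP, hS, Finset.prod_mul_distrib, hXa, hb]
  have hQprod : ∏ i, Q i = (-1) ^ (k * (k - 1) / 2) * vdm b ^ 2 * Xb := by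
    rw [← aux_offdiag b, hXb, ← Finset.prod_mul_distrib]
    refine Finset.prod_congr rfl fun m _ => ?_
    have : Q m = ∏ l, if e m ≠ l then rhoC N (e m) - rhoC N l else 1 := by
      simp only [hQ]
      rw [← Finset.prod_filter]
      congr 1
      ext l
      simp [eq_comm]
    rw [this, hS]
    congr 1
    · simp [he.injective.eq_iff, hb]
    · refine Finset.prod_congr rfl fun l hl => ?_
      rw [if_pos]
      rintro rfl
      simp at hl
  have hab : (∏ p : Fin k × Fin k, if p.1 ≠ p.2 then a p.1 - rhoC N (e p.2) else 1) *
      ∏ i, (a i - b i) = ∏ i, ∏ j, (a i - b j) := by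
    rw [Fintype.prod_prod_type, ← Finset.prod_mul_distrib]
    refine Finset.prod_congr rfl fun i _ => ?_
    rw [← Finset.prod_erase_mul _ _ (Finset.mem_univ i)]
    simp only [ne_eq, not_true_eq_false, if_false, mul_one]
    rw [← Finset.prod_erase_mul _ _ (Finset.mem_univ i)]
    congr 1
    refine Finset.prod_congr rfl fun j hj => ?_
    rw [if_pos (Finset.ne_of_mem_erase hj).symm]
  have hT0 : (∏ i, ∏ j, (a i - b j)) ≠ 0 := Finset.prod_ne_zero_iff.2 fun m _ =>
    Finset.prod_ne_zero_iff.2 fun l _ => sub_ne_zero.2 (ha_avoid _ _)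
  have ha0 : vdm a ≠ 0 := aux_vdm_ne ha_inj
  have hb0 : vdm b ≠ 0 := aux_vdm_ne hbinj
  have hmu : vdm (perturbMany a e) = vdm (rhoC N) * vdm a * Xa / (vdm b * Xb) := by
    rw [eq_div_iff (mul_ne_zero hb0 hXb0), ← mul_assoc]
    exact key
  rw [hmu, Finset.prod_div_distrib, hPprod, hQprod, ← hab]
  rw [← hab] at hT0
  have hT1 := left_ne_zero_of_mul hT0
  have hT2 := right_ne_zero_of_mul hT0
  have hs : ((-1 : ℂ) ^ (k * (k - 1) / 2)) * (-1 : ℂ) ^ (k * (k - 1) / 2) = 1 := by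
    rw [← mul_pow]; simp
  generalize (-1 : ℂ) ^ (k * (k - 1) / 2) = σ at hs ⊢
  generalize (∏ p : Fin k × Fin k, if p.1 ≠ p.2 then a p.1 - rhoC N (e p.2) else 1) = T1 at *
  generalize (∏ i, (a i - b i)) = T2 at *
  field_simp
  linear_combination (-F.det) * hs

end GS
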